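/- Fix ν > 0 and h ∈ [0, 1), set θ_h := arcsin h, and define G : ℝ → ℝ by G(x) := (2ν/π)·∫₀^∞ t·e^{−t|x|·cos θ_h} / (ν²t²cos²θ_h + 4(t² − 1)²) dt. Then G is positive, even, bounded, integrable on ℝ, continuous on ℝ and infinitely differentiable on ℝ \ {0}, and for every k ∈ ℝ its Fourier transform satisfies ∫_ℝ e^{−ikx} G(x) dx = 1 / (k² + (ν/2)·cos²θ_h·|k| + cos²θ_h). -/

import Mathlib

open MeasureTheory Real Filter Set
open scoped ENNReal Topology

/-- The fundamental solution of the linearized Néel wall operator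
`L = -d²/dx² + (ν/2) cos²θ_h (-d²/dx²)^{1/2} + cos²θ_h`, with `θ_h = arcsin h`. -/
noncomputable def Gfun (ν h : ℝ) (x : ℝ) : ℝ :=
  2 * ν / Real.pi *
    ∫ t in Set.Ioi (0 : ℝ),
      t * Real.exp (-t * |x| * Real.cos (Real.arcsin h)) /
        (ν ^ 2 * t ^ 2 * Real.cos (Real.arcsin h) ^ 2 + 4 * (t ^ 2 - 1) ^ 2)

/-- the quartic -/
noncomputable def QQ (b t : ℝ) : ℝ := b ^ 2 * t ^ 2 + (t ^ 2 - 1) ^ 2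

lemma QQ_lower {b : ℝ} (hb : 0 < b) : ∃ m : ℝ, 0 < m ∧ ∀ t, m * (1 + t ^ 2) ^ 2 ≤ QQ b t := by
  refine ⟨min 1 (b ^ 2 / 4), by positivity, fun t => ?_⟩
  have h1 := min_le_left 1 (b ^ 2 / 4)
  have h2 := min_le_right 1 (b ^ 2 / 4)
  set m := min 1 (b ^ 2 / 4)
  unfold QQ
  have h3 : m * (t ^ 2 - 1) ^ 2 ≤ 1 * (t ^ 2 - 1) ^ 2 := by gcongr
  have h4 : m * t ^ 2 ≤ b ^ 2 / 4 * t ^ 2 := by gcongr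
  nlinarith

lemma QQ_pos {b : ℝ} (hb : 0 < b) (t : ℝ) : 0 < QQ b t := by
  obtain ⟨m, hm, h⟩ := QQ_lower hb
  exact lt_of_lt_of_le (by positivity) (h t)

lemma QQ_cont (b : ℝ) : Continuous (QQ b) := by unfold QQ; fun_prop

lemma integrable_of_bound {b : ℝ} (hb : 0 < b) (f : ℝ → ℝ) (hf : Continuous f)
    (h : ∀ t, |f t| ≤ 1 + t ^ 2) : Integrable (fun t => f t / QQ b t) := by
  obtain ⟨m, hm, hQ⟩ := QQ_lower hb
  refine (integrable_inv_one_add_sq.const_mul m⁻¹).mono'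
    (hf.div (QQ_cont b) fun t => (QQ_pos hb t).ne').aestronglyMeasurable (ae_of_all _ fun t => ?_)
  rw [norm_eq_abs, abs_div, abs_of_pos (QQ_pos hb t), div_le_iff₀ (QQ_pos hb t)]
  refine (h t).trans ?_
  have : m⁻¹ * (1 + t ^ 2)⁻¹ * (m * (1 + t ^ 2) ^ 2) = 1 + t ^ 2 := by
    field_simp
  refine this.symm.le.trans ?_
  gcongr
  exact hQ t

lemma int_sum {b : ℝ} (hb : 0 < b) : ∫ t in Ioi (0 : ℝ), (1 + t ^ 2) / QQ b t = π / b := by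
  have hc : ContinuousWithinAt (Function.update (fun t : ℝ => b⁻¹ * arctan ((t - t⁻¹) / b)) 0
      (b⁻¹ * (-(π / 2)))) (Ici 0) 0 := by
    rw [continuousWithinAt_update_same]
    have : Ici (0 : ℝ) \ {0} = Ioi 0 := by simp
    rw [this]
    refine Tendsto.const_mul _ ((tendsto_arctan_atBot.mono_right nhdsWithin_le_nhds).comp ?_)
    refine Tendsto.atBot_div_const hb ?_
    have h1 : Tendsto (fun t : ℝ => t) (𝓝[>] 0) (𝓝 0) := tendsto_id.mono_left nhdsWithin_le_nhds
    have h2 : Tendsto (fun t : ℝ => -t⁻¹) (𝓝[>] 0) atBot :=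
      tendsto_neg_atTop_atBot.comp tendsto_inv_nhdsGT_zero
    simpa [sub_eq_add_neg] using h1.add_atBot h2
  have key := integral_Ioi_of_hasDerivAt_of_nonneg (l := b⁻¹ * (π / 2))
    (g' := fun t => (1 + t ^ 2) / QQ b t) hc ?_ ?_ ?_
  · rw [key]; simp; field_simp; ring
  · intro t ht
    have ht : 0 < t := ht
    have : HasDerivAt (fun t : ℝ => b⁻¹ * arctan ((t - t⁻¹) / b)) ((1 + t ^ 2) / QQ b t) t := by
      have h1 := ((((hasDerivAt_id t).sub (hasDerivAt_inv ht.ne')).div_const b).arctan).const_mul b⁻¹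
      convert! h1 using 1
      have := QQ_pos hb t
      have h2 : QQ b t = b ^ 2 * t ^ 2 * (1 + ((t - t⁻¹) / b) ^ 2) := by
        unfold QQ; field_simp
      simp only [h2, Pi.sub_apply, id]
      field_simp
      ring
    refine this.congr_of_eventuallyEq ?_
    filter_upwards [lt_mem_nhds ht] with s hs
    simp [hs.ne']
  · intro t _
    have := QQ_pos hb t
    positivity
  · have h1 : Tendsto (fun t : ℝ => b⁻¹ * arctan ((t - t⁻¹) / b)) atTop (𝓝 (b⁻¹ * (π / 2))) := by
      refine Tendsto.const_mul _ ((tendsto_arctan_atTop.mono_right nhdsWithin_le_nhds).comp ?_)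
      refine Tendsto.atTop_div_const hb ?_
      simpa [sub_eq_add_neg] using tendsto_id.atTop_add (tendsto_inv_atTop_zero (𝕜 := ℝ)).neg
    refine h1.congr' ?_
    filter_upwards [eventually_gt_atTop 0] with s hs
    simp [hs.ne']

lemma int_eq {b : ℝ} (hb : 0 < b) :
    ∫ t in Ioi (0 : ℝ), t ^ 2 / QQ b t = ∫ t in Ioi (0 : ℝ), 1 / QQ b t := by
  rw [← integral_comp_rpow_Ioi (fun t => 1 / QQ b t) (p := -1) (by norm_num)]
  refine setIntegral_congr_fun measurableSet_Ioi fun t ht => ?_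
  have ht : 0 < t := ht
  have h1 : t ^ ((-1 : ℝ) - 1) = (t ^ 2)⁻¹ := by
    rw [show (-1 : ℝ) - 1 = -((2 : ℕ) : ℝ) by norm_num, rpow_neg ht.le, rpow_natCast]
  have h2 : QQ b t⁻¹ = QQ b t / t ^ 4 := by
    unfold QQ; field_simp; ring
  have := QQ_pos hb t
  simp only [rpow_neg_one, h1, h2, smul_eq_mul, abs_neg, abs_one]
  field_simp

lemma int_one {b : ℝ} (hb : 0 < b) : ∫ t in Ioi (0 : ℝ), 1 / QQ b t = π / (2 * b) := by
  have h := int_sum hb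
  have i1 := (integrable_of_bound hb (fun _ => 1) (by fun_prop)
    (fun t => by simp; positivity)).integrableOn (s := Ioi 0)
  have i2 := (integrable_of_bound hb (fun t => t ^ 2) (by fun_prop)
    (fun t => by simp)).integrableOn (s := Ioi 0)
  simp only [add_div] at h
  rw [integral_add i1 i2, int_eq hb] at h
  rw [show π / (2 * b) = (π / b) / 2 by field_simp]
  linarith

lemma int_lor {κ : ℝ} (hκ : 0 < κ) :
    IntegrableOn (fun t : ℝ => 1 / (t ^ 2 + κ ^ 2)) (Ioi 0) ∧
    ∫ t in Ioi (0 : ℝ), 1 / (t ^ 2 + κ ^ 2) = π / (2 * κ) := by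
  have e : ∀ t : ℝ, 1 / (t ^ 2 + κ ^ 2) = (κ ^ 2)⁻¹ * (1 + (κ⁻¹ * t) ^ 2)⁻¹ := by
    intro t
    have : 0 < t ^ 2 + κ ^ 2 := by positivity
    field_simp
    ring
  simp only [e]
  constructor
  · exact ((integrable_inv_one_add_sq.comp_mul_left' (inv_ne_zero hκ.ne')).const_mul _).integrableOn
  · rw [integral_const_mul, integral_comp_mul_left_Ioi (fun t => (1 + t ^ 2)⁻¹) 0 (inv_pos.2 hκ)]
    simp
    field_simp

lemma int_J {b κ : ℝ} (hb : 0 < b) (hκ : 0 < κ) (hne : κ ^ 2 - b * κ + 1 ≠ 0) :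
    ∫ t in Ioi (0 : ℝ), t ^ 2 / ((t ^ 2 + κ ^ 2) * QQ b t)
      = π / (2 * b * (κ ^ 2 + b * κ + 1)) := by
  have hp : 0 < κ ^ 2 + b * κ + 1 := by positivity
  set N := (κ ^ 2 + b * κ + 1) * (κ ^ 2 - b * κ + 1) with hN
  have hN0 : N ≠ 0 := mul_ne_zero hp.ne' hne
  have e : ∀ t : ℝ, t ^ 2 / ((t ^ 2 + κ ^ 2) * QQ b t) =
      (-κ ^ 2 / N) * (1 / (t ^ 2 + κ ^ 2)) + ((κ ^ 2 / N) * (t ^ 2 / QQ b t)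
        + N⁻¹ * (1 / QQ b t)) := by
    intro t
    have h1 : 0 < t ^ 2 + κ ^ 2 := by positivity
    have h2 := QQ_pos hb t
    field_simp
    rw [hN]; unfold QQ; ring
  have i1 := (integrable_of_bound hb (fun _ => 1) (by fun_prop)
    (fun t => by simp; positivity)).integrableOn (s := Ioi 0)
  have i2 := (integrable_of_bound hb (fun t => t ^ 2) (by fun_prop)
    (fun t => by simp)).integrableOn (s := Ioi 0)
  simp only [e]
  have i3 : IntegrableOn (fun t : ℝ => (κ ^ 2 / N) * (t ^ 2 / QQ b t)
        + N⁻¹ * (1 / QQ b t)) (Ioi 0) := (i2.const_mul _).add (i1.const_mul _)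
  rw [integral_add ((int_lor hκ).1.const_mul _) i3,
    integral_add (i2.const_mul _) (i1.const_mul _)]
  simp only [integral_const_mul]
  rw [(int_lor hκ).2, int_eq hb, int_one hb, hN]
  set R := κ ^ 2 - b * κ + 1 with hR
  field_simp
  rw [hR]
  ring

lemma fourier_exp {a : ℝ} (ha : 0 < a) (k : ℝ) :
    ∫ x : ℝ, Complex.exp (-Complex.I * k * x) * (Real.exp (-a * |x|) : ℂ)
      = ((2 * a / (a ^ 2 + k ^ 2) : ℝ) : ℂ) := by
  have e1 : EqOn (fun x : ℝ => Complex.exp (-Complex.I * k * x) * (Real.exp (-a * |x|) : ℂ))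
      (fun x : ℝ => Complex.exp ((-a - Complex.I * k) * x)) (Ioi 0) := by
    intro x hx
    have hx : 0 < x := hx
    simp only [abs_of_pos hx, Complex.ofReal_exp, ← Complex.exp_add]
    congr 1; push_cast; ring
  have e2 : EqOn (fun x : ℝ => Complex.exp (-Complex.I * k * x) * (Real.exp (-a * |x|) : ℂ))
      (fun x : ℝ => Complex.exp ((a - Complex.I * k) * x)) (Iic 0) := by
    intro x hx
    have hx : x ≤ 0 := hx
    simp only [abs_of_nonpos hx, Complex.ofReal_exp, ← Complex.exp_add]
    congr 1; push_cast; ring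
  have r1 : (-a - Complex.I * k : ℂ).re < 0 := by simpa
  have r2 : 0 < (a - Complex.I * k : ℂ).re := by simpa
  have i1 := (integrableOn_congr_fun e1 measurableSet_Ioi).2 (integrableOn_exp_mul_complex_Ioi r1 0)
  have i2 := (integrableOn_congr_fun e2 measurableSet_Iic).2 (integrableOn_exp_mul_complex_Iic r2 0)
  rw [← intervalIntegral.integral_Iic_add_Ioi i2 i1, setIntegral_congr_fun measurableSet_Ioi e1,
    setIntegral_congr_fun measurableSet_Iic e2, integral_exp_mul_complex_Ioi r1,
    integral_exp_mul_complex_Iic r2]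
  have n1 : (-a - Complex.I * k : ℂ) ≠ 0 := fun h => by simp [h] at r1
  have n2 : (a - Complex.I * k : ℂ) ≠ 0 := fun h => by simp [h] at r2
  have n3 : ((a : ℂ) ^ 2 + k ^ 2) ≠ 0 := by
    have : 0 < a ^ 2 + k ^ 2 := by positivity
    exact_mod_cast this.ne'
  push_cast
  simp only [mul_zero, Complex.exp_zero]
  field_simp
  linear_combination (-(2 : ℂ) * a * k ^ 2) * Complex.I_sq

lemma integrable_exp_abs {a : ℝ} (ha : 0 < a) :
    Integrable (fun x : ℝ => Real.exp (-a * |x|)) ∧ ∫ x : ℝ, Real.exp (-a * |x|) = 2 / a := by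
  have h2 : ∫ x : ℝ, Real.exp (-a * |x|) = 2 / a := by
    rw [integral_comp_abs (f := fun x => Real.exp (-a * x)), integral_exp_mul_Ioi (by linarith)]
    simp
    ring
  refine ⟨?_, h2⟩
  by_contra h
  rw [integral_undef h] at h2
  have : 0 < 2 / a := by positivity
  linarith

/-- Laplace-type integral -/
noncomputable def LL (b c x : ℝ) : ℝ := ∫ t in Ioi (0 : ℝ), t / QQ b t * Real.exp (-(t * c) * |x|)

lemma ff_int {b : ℝ} (hb : 0 < b) : Integrable (fun t => t / QQ b t) :=
  integrable_of_bound hb (fun t => t) continuous_id (fun t => by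
    rw [abs_le]; constructor <;> nlinarith [sq_nonneg (t + 1), sq_nonneg (t - 1)])

lemma ff_cont {b : ℝ} (hb : 0 < b) : Continuous (fun t => t / QQ b t) :=
  continuous_id.div (QQ_cont b) fun t => (QQ_pos hb t).ne'

lemma LL_bound {b c : ℝ} (hb : 0 < b) (hc : 0 < c) (x t : ℝ) (ht : 0 < t) :
    ‖t / QQ b t * Real.exp (-(t * c) * |x|)‖ ≤ t / QQ b t := by
  have := QQ_pos hb t
  rw [norm_mul, norm_of_nonneg (by positivity), norm_of_nonneg (by positivity)]
  refine mul_le_of_le_one_right (by positivity) (Real.exp_le_one_iff.2 ?_)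
  have : 0 ≤ t * c * |x| := by positivity
  linarith

lemma LL_integrable {b c : ℝ} (hb : 0 < b) (hc : 0 < c) (x : ℝ) :
    IntegrableOn (fun t : ℝ => t / QQ b t * Real.exp (-(t * c) * |x|)) (Ioi 0) := by
  refine Integrable.mono' (ff_int hb).integrableOn
    (((ff_cont hb).mul (by fun_prop)).aestronglyMeasurable) ?_
  exact (ae_restrict_iff' measurableSet_Ioi).2 (ae_of_all _ fun t ht => LL_bound hb hc x t ht)

lemma LL_pos {b c : ℝ} (hb : 0 < b) (hc : 0 < c) (x : ℝ) : 0 < LL b c x := by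
  unfold LL
  rw [setIntegral_pos_iff_support_of_nonneg_ae _ (LL_integrable hb hc x)]
  · have : Ioi (0 : ℝ) ⊆
        Function.support (fun t : ℝ => t / QQ b t * Real.exp (-(t * c) * |x|)) ∩ Ioi 0 := by
      intro t ht
      refine ⟨?_, ht⟩
      have ht : 0 < t := ht
      have := QQ_pos hb t
      have : 0 < t / QQ b t * Real.exp (-(t * c) * |x|) := by positivity
      exact this.ne'
    refine lt_of_lt_of_le ?_ (measure_mono this)
    simp
  · refine (ae_restrict_iff' measurableSet_Ioi).2 (ae_of_all _ fun t ht => ?_)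
    have ht : 0 < t := ht
    have := QQ_pos hb t
    simp only [Pi.zero_apply]
    positivity

lemma LL_le {b c : ℝ} (hb : 0 < b) (hc : 0 < c) (x : ℝ) :
    |LL b c x| ≤ ∫ t in Ioi (0 : ℝ), t / QQ b t := by
  unfold LL
  rw [← norm_eq_abs]
  refine norm_integral_le_of_norm_le (ff_int hb).integrableOn ?_
  exact (ae_restrict_iff' measurableSet_Ioi).2 (ae_of_all _ fun t ht => LL_bound hb hc x t ht)

lemma LL_cont {b c : ℝ} (hb : 0 < b) (hc : 0 < c) : Continuous (LL b c) := by
  unfold LL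
  refine continuous_of_dominated
    (F := fun x t : ℝ => t / QQ b t * Real.exp (-(t * c) * |x|)) (bound := fun t => t / QQ b t) ?_ ?_ (ff_int hb).integrableOn ?_
  · exact fun x => (LL_integrable hb hc x).aestronglyMeasurable
  · exact fun x => (ae_restrict_iff' measurableSet_Ioi).2
      (ae_of_all _ fun t ht => LL_bound hb hc x t ht)
  · exact ae_of_all _ fun t => by fun_prop

lemma LL_prod {b c : ℝ} (hb : 0 < b) (hc : 0 < c) :
    Integrable (fun p : ℝ × ℝ => p.2 / QQ b p.2 * Real.exp (-(p.2 * c) * |p.1|))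
      (volume.prod (volume.restrict (Ioi 0))) := by
  have hm : Continuous (fun p : ℝ × ℝ => p.2 / QQ b p.2 * Real.exp (-(p.2 * c) * |p.1|)) :=
    ((ff_cont hb).comp continuous_snd).mul (by fun_prop)
  rw [integrable_prod_iff' hm.aestronglyMeasurable]
  constructor
  · refine (ae_restrict_iff' measurableSet_Ioi).2 (ae_of_all _ fun t ht => ?_)
    exact (integrable_exp_abs (mul_pos ht hc)).1.const_mul (t / QQ b t)
  · have i1 := ((integrable_of_bound hb (fun _ => 1) (by fun_prop)
      (fun t => by simp; positivity)).const_mul (2 / c)).integrableOn (s := Ioi 0)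
    refine (integrableOn_congr_fun ?_ measurableSet_Ioi).1 i1
    intro t ht
    have ht : 0 < t := ht
    have := QQ_pos hb t
    have e : ∀ x : ℝ, ‖t / QQ b t * Real.exp (-(t * c) * |x|)‖
        = t / QQ b t * Real.exp (-(t * c) * |x|) := fun x => norm_of_nonneg (by positivity)
    simp only [e, integral_const_mul, (integrable_exp_abs (mul_pos ht hc)).2]
    field_simp

lemma LL_int {b c : ℝ} (hb : 0 < b) (hc : 0 < c) : Integrable (LL b c) :=
  (LL_prod hb hc).integral_prod_left

lemma LL_fourier1 {b c : ℝ} (hb : 0 < b) (hc : 0 < c) (k : ℝ) :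
    ∫ x : ℝ, Complex.exp (-Complex.I * k * x) * (LL b c x : ℂ)
      = ((∫ t in Ioi (0 : ℝ), t / QQ b t * (2 * (t * c) / ((t * c) ^ 2 + k ^ 2)) : ℝ) : ℂ) := by
  have hI : Integrable (Function.uncurry fun x t : ℝ => Complex.exp (-Complex.I * k * x) *
      ((t / QQ b t * Real.exp (-(t * c) * |x|) : ℝ) : ℂ))
      (volume.prod (volume.restrict (Ioi 0))) := by
    have h1 := (LL_prod hb hc).ofReal (𝕜 := ℂ)
    refine h1.bdd_mul (c := 1) (f := fun p : ℝ × ℝ => Complex.exp (-Complex.I * k * p.1)) ?_ ?_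
    · exact Continuous.aestronglyMeasurable (by fun_prop)
    · refine ae_of_all _ fun p => ?_
      rw [Complex.norm_exp]; simp
  have e1 : ∀ x : ℝ, Complex.exp (-Complex.I * k * x) * (LL b c x : ℂ) =
      ∫ t in Ioi (0 : ℝ), Complex.exp (-Complex.I * k * x) *
      ((t / QQ b t * Real.exp (-(t * c) * |x|) : ℝ) : ℂ) := by
    intro x
    rw [integral_const_mul, integral_complex_ofReal]; rfl
  simp only [e1]
  rw [integral_integral_swap hI, ← integral_complex_ofReal]
  refine setIntegral_congr_fun measurableSet_Ioi fun t ht => ?_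
  have ht : 0 < t := ht
  rw [Complex.ofReal_mul, ← fourier_exp (mul_pos ht hc) k, ← integral_const_mul]
  congr 1
  ext x
  rw [Complex.ofReal_mul]; ring

lemma LL_fourier2 {b c : ℝ} (hb : 0 < b) (hc : 0 < c) {k : ℝ} (hk : k ≠ 0)
    (hne : (|k| / c) ^ 2 - b * (|k| / c) + 1 ≠ 0) :
    ∫ x : ℝ, Complex.exp (-Complex.I * k * x) * (LL b c x : ℂ)
      = ((π * c / (b * (k ^ 2 + b * c * |k| + c ^ 2)) : ℝ) : ℂ) := by
  rw [LL_fourier1 hb hc]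
  congr 1
  have hk' : 0 < |k| := abs_pos.2 hk
  have hJ := int_J hb (div_pos hk' hc) hne
  have : ∀ t : ℝ, t / QQ b t * (2 * (t * c) / ((t * c) ^ 2 + k ^ 2))
      = (2 / c) * (t ^ 2 / ((t ^ 2 + (|k| / c) ^ 2) * QQ b t)) := by
    intro t
    have := QQ_pos hb t
    have h1 : 0 < (t * c) ^ 2 + k ^ 2 := by positivity
    have h2 : 0 < t ^ 2 + (|k| / c) ^ 2 := by positivity
    rw [div_pow, sq_abs] at h2 ⊢
    field_simp
  simp only [this, integral_const_mul, hJ]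
  rw [← sq_abs k]
  field_simp

lemma LL_fourier {b c : ℝ} (hb : 0 < b) (hc : 0 < c) (k : ℝ) :
    ∫ x : ℝ, Complex.exp (-Complex.I * k * x) * (LL b c x : ℂ)
      = ((π * c / (b * (k ^ 2 + b * c * |k| + c ^ 2)) : ℝ) : ℂ) := by
  have c1 : Continuous fun k : ℝ =>
      ∫ x : ℝ, Complex.exp (-Complex.I * k * x) * (LL b c x : ℂ) := by
    refine continuous_of_dominated (bound := fun x => |LL b c x|) ?_ ?_ (LL_int hb hc).abs ?_
    · intro k
      have := LL_cont hb hc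
      exact Continuous.aestronglyMeasurable (by fun_prop)
    · refine fun k => ae_of_all _ fun x => ?_
      rw [norm_mul, Complex.norm_exp]; simp
    · exact ae_of_all _ fun x => by fun_prop
  have c2 : Continuous fun k : ℝ =>
      ((π * c / (b * (k ^ 2 + b * c * |k| + c ^ 2)) : ℝ) : ℂ) := by
    refine Complex.continuous_ofReal.comp (Continuous.div (by fun_prop) (by fun_prop) fun k => ?_)
    positivity
  let p : Polynomial ℝ := Polynomial.X * ((Polynomial.X ^ 2 + Polynomial.C (c ^ 2)) ^ 2
    - Polynomial.C (b ^ 2 * c ^ 2) * Polynomial.X ^ 2)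
  have hev : ∀ k, p.eval k = k * ((k ^ 2 + c ^ 2) ^ 2 - b ^ 2 * c ^ 2 * k ^ 2) := by
    intro k; simp [p]
  have hp0 : p ≠ 0 := by
    intro h
    have h1 := hev ((b + 1) * c)
    rw [h, Polynomial.eval_zero] at h1
    have h2 : 0 < (b + 1) * c * ((((b + 1) * c) ^ 2 + c ^ 2) ^ 2
      - b ^ 2 * c ^ 2 * ((b + 1) * c) ^ 2) := by
      have : (b + 1) * c * ((((b + 1) * c) ^ 2 + c ^ 2) ^ 2
        - b ^ 2 * c ^ 2 * ((b + 1) * c) ^ 2) = (b + 1) * c ^ 5 * (((b + 1) ^ 2 + 1) ^ 2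
        - b ^ 2 * (b + 1) ^ 2) := by ring
      rw [this]
      have : 0 < ((b + 1) ^ 2 + 1) ^ 2 - b ^ 2 * (b + 1) ^ 2 := by
        ring_nf; positivity
      positivity
    linarith
  have hd : Dense ({k : ℝ | p.eval k = 0}ᶜ) := by
    have hf : {k : ℝ | p.eval k = 0}.Finite := by
      refine (Multiset.toFinset p.roots).finite_toSet.subset fun k hk => ?_
      simpa [hp0] using hk
    exact hf.countable.dense_compl ℝ
  refine congrFun (Continuous.ext_on hd c1 c2 fun k hk => ?_) k
  have hk : p.eval k ≠ 0 := hk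
  rw [hev] at hk
  refine LL_fourier2 hb hc (left_ne_zero_of_mul hk) fun h0 => right_ne_zero_of_mul hk ?_
  rw [← sq_abs k]
  field_simp at h0
  have : |k| ^ 2 + c ^ 2 = b * c * |k| := by linear_combination h0
  rw [this]; ring

lemma LL_smooth {b c : ℝ} (hb : 0 < b) (hc : 0 < c) :
    ContDiffOn ℝ (⊤ : ℕ∞) (LL b c) {(0 : ℝ)}ᶜ := by
  let Φ : ℂ → ℂ := fun z => ∫ t in Ioi (0 : ℝ), ((t / QQ b t : ℝ) : ℂ) * Complex.exp (-(t * c) * z)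
  have hU : IsOpen {z : ℂ | 0 < z.re} := isOpen_lt continuous_const Complex.continuous_re
  have hcf : Continuous fun t : ℝ => ((t / QQ b t : ℝ) : ℂ) :=
    Complex.continuous_ofReal.comp (ff_cont hb)
  have hbd : ∀ z : ℂ, 0 < z.re → ∀ t : ℝ, 0 < t →
      ‖((t / QQ b t : ℝ) : ℂ) * Complex.exp (-(t * c) * z)‖ ≤ t / QQ b t := by
    intro z hz t ht
    have := QQ_pos hb t
    rw [norm_mul, Complex.norm_exp, Complex.norm_of_nonneg (by positivity)]
    refine mul_le_of_le_one_right (by positivity) (Real.exp_le_one_iff.2 ?_)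
    have : 0 ≤ t * c * z.re := by positivity
    simpa using this
  have hΦ : DifferentiableOn ℂ Φ {z : ℂ | 0 < z.re} := by
    intro z hz
    refine DifferentiableAt.differentiableWithinAt ?_
    refine (hasDerivAt_integral_of_dominated_loc_of_deriv_le (𝕜 := ℂ) (s := {z : ℂ | 0 < z.re})
      (F := fun z (t : ℝ) => ((t / QQ b t : ℝ) : ℂ) * Complex.exp (-(t * c) * z))
      (F' := fun z (t : ℝ) => -(t * c) * (((t / QQ b t : ℝ) : ℂ) * Complex.exp (-(t * c) * z)))
      (bound := fun t => c * (t ^ 2 / QQ b t))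
      (hU.mem_nhds hz) ?_ ?_ ?_ ?_ ?_ ?_).2.differentiableAt
    · exact Eventually.of_forall fun w => (hcf.mul (by fun_prop)).aestronglyMeasurable
    · refine Integrable.mono' (ff_int hb).integrableOn
        ((hcf.mul (by fun_prop)).aestronglyMeasurable) ?_
      exact (ae_restrict_iff' measurableSet_Ioi).2 (ae_of_all _ fun t ht => hbd z hz t ht)
    · exact Continuous.aestronglyMeasurable (Continuous.mul (by fun_prop) (hcf.mul (by fun_prop)))
    · refine (ae_restrict_iff' measurableSet_Ioi).2 (ae_of_all _ fun t ht w hw => ?_)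
      have ht : 0 < t := ht
      rw [norm_mul]
      have h1 : ‖(-(t * c) : ℂ)‖ = t * c := by
        rw [norm_neg, ← Complex.ofReal_mul, Complex.norm_of_nonneg (by positivity)]
      rw [h1]
      calc t * c * _ ≤ t * c * (t / QQ b t) := by gcongr; exact hbd w hw t ht
        _ = _ := by ring
    · exact ((integrable_of_bound hb (fun t => t ^ 2) (by fun_prop)
        (fun t => by simp)).const_mul c).integrableOn
    · refine ae_of_all _ fun t w _ => ?_
      have h1 := (((hasDerivAt_id w).const_mul (-(t * c) : ℂ)).cexp).const_mul
        ((t / QQ b t : ℝ) : ℂ)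
      convert! h1 using 1
      simp; ring
  have hS : ContDiffOn ℂ (⊤ : ℕ∞) Φ {z : ℂ | 0 < z.re} := hΦ.contDiffOn hU
  have hLΦ : ∀ x, LL b c x = (Φ (|x| : ℝ)).re := by
    intro x
    have : Φ (|x| : ℝ) = (LL b c x : ℂ) := by
      unfold LL
      rw [← integral_complex_ofReal]
      simp only [Φ]
      congr 1; ext t; push_cast; rfl
    rw [this, Complex.ofReal_re]
  intro x hx
  have hx : x ≠ 0 := hx
  refine ContDiffAt.contDiffWithinAt ?_
  rw [show LL b c = fun x => (Φ (|x| : ℝ)).re from funext hLΦ]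
  have a1 : ContDiffAt ℝ (⊤ : ℕ∞) (fun x : ℝ => |x|) x := contDiffAt_abs hx
  have a2 : ContDiffAt ℝ (⊤ : ℕ∞) (fun x : ℝ => ((|x| : ℝ) : ℂ)) x :=
    Complex.ofRealCLM.contDiff.contDiffAt.comp x a1
  have a3 : ContDiffAt ℝ (⊤ : ℕ∞) Φ ((|x| : ℝ) : ℂ) :=
    (hS.contDiffAt (hU.mem_nhds (by simpa using hx))).restrict_scalars ℝ
  have a4 : ContDiffAt ℝ (⊤ : ℕ∞) (fun x : ℝ => Φ ((|x| : ℝ) : ℂ)) x :=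
    ContDiffAt.comp (g := Φ) (f := fun x : ℝ => ((|x| : ℝ) : ℂ)) x a3 a2
  exact Complex.reCLM.contDiff.contDiffAt.comp x a4

lemma Gfun_eq (ν h x : ℝ) : Gfun ν h x = ν / (2 * π) *
    LL (ν * Real.cos (Real.arcsin h) / 2) (Real.cos (Real.arcsin h)) x := by
  unfold Gfun LL
  have : ∀ t : ℝ, t * Real.exp (-t * |x| * Real.cos (Real.arcsin h)) /
        (ν ^ 2 * t ^ 2 * Real.cos (Real.arcsin h) ^ 2 + 4 * (t ^ 2 - 1) ^ 2) = (1 / 4) *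
      (t / QQ (ν * Real.cos (Real.arcsin h) / 2) t
        * Real.exp (-(t * Real.cos (Real.arcsin h)) * |x|)) := by
    intro t
    have e1 : ν ^ 2 * t ^ 2 * Real.cos (Real.arcsin h) ^ 2 + 4 * (t ^ 2 - 1) ^ 2
        = 4 * QQ (ν * Real.cos (Real.arcsin h) / 2) t := by unfold QQ; ring
    rw [e1, show -t * |x| * Real.cos (Real.arcsin h) = -(t * Real.cos (Real.arcsin h)) * |x| by ring,
      ← div_div]
    ring
  simp only [this, integral_const_mul]
  generalize (∫ t in Ioi (0 : ℝ), t / QQ (ν * Real.cos (Real.arcsin h) / 2) t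
        * Real.exp (-(t * Real.cos (Real.arcsin h)) * |x|)) = A
  field_simp
  ring

/-- the fundamental solution `G` is positive, even, bounded, integrable,
continuous, smooth away from the origin, and has the stated Fourier transform. -/
theorem Gfun_properties (ν h : ℝ) (hν : 0 < ν) (hh : h ∈ Set.Ico (0 : ℝ) 1) :
    (∀ x : ℝ, 0 < Gfun ν h x) ∧
      (∀ x : ℝ, Gfun ν h (-x) = Gfun ν h x) ∧
      (∃ M : ℝ, ∀ x : ℝ, |Gfun ν h x| ≤ M) ∧
      MeasureTheory.Integrable (Gfun ν h) ∧
      Continuous (Gfun ν h) ∧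
      ContDiffOn ℝ (⊤ : ℕ∞) (Gfun ν h) {(0 : ℝ)}ᶜ ∧
      ∀ k : ℝ,
        (∫ x : ℝ, Complex.exp (-Complex.I * (k : ℂ) * (x : ℂ)) * (Gfun ν h x : ℂ))
          = ((k ^ 2 + ν / 2 * Real.cos (Real.arcsin h) ^ 2 * |k|
              + Real.cos (Real.arcsin h) ^ 2 : ℝ) : ℂ)⁻¹ := by
  have hc : 0 < Real.cos (Real.arcsin h) := by
    rw [Real.cos_arcsin]
    apply Real.sqrt_pos.2
    nlinarith [hh.1, hh.2]
  have hb : 0 < ν * Real.cos (Real.arcsin h) / 2 := by positivity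
  have hG : Gfun ν h = fun x => ν / (2 * π) *
    LL (ν * Real.cos (Real.arcsin h) / 2) (Real.cos (Real.arcsin h)) x := funext (Gfun_eq ν h)
  have hC : 0 < ν / (2 * π) := by positivity
  rw [hG]
  refine ⟨fun x => mul_pos hC (LL_pos hb hc x), fun x => by simp [LL], ⟨ν / (2 * π) *
      ∫ t in Ioi (0 : ℝ), t / QQ (ν * Real.cos (Real.arcsin h) / 2) t, fun x => ?_⟩,
    (LL_int hb hc).const_mul _, continuous_const.mul (LL_cont hb hc),
    contDiffOn_const.mul (LL_smooth hb hc), fun k => ?_⟩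
  · rw [abs_mul, abs_of_pos hC]
    exact mul_le_mul_of_nonneg_left (LL_le hb hc x) hC.le
  · have e : ∀ x : ℝ, Complex.exp (-Complex.I * (k : ℂ) * (x : ℂ)) * ((ν / (2 * π) *
        LL (ν * Real.cos (Real.arcsin h) / 2) (Real.cos (Real.arcsin h)) x : ℝ) : ℂ)
        = ((ν / (2 * π) : ℝ) : ℂ) * (Complex.exp (-Complex.I * (k : ℂ) * (x : ℂ)) *
          (LL (ν * Real.cos (Real.arcsin h) / 2) (Real.cos (Real.arcsin h)) x : ℂ)) := by
      intro x; rw [Complex.ofReal_mul]; ring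
    simp only [e]
    rw [integral_const_mul, LL_fourier hb hc, ← Complex.ofReal_mul, ← Complex.ofReal_inv]
    congr 1
    set c := Real.cos (Real.arcsin h)
    have h1 : 0 < k ^ 2 + ν / 2 * c ^ 2 * |k| + c ^ 2 := by positivity
    rw [show k ^ 2 + ν * c / 2 * c * |k| + c ^ 2 = k ^ 2 + ν / 2 * c ^ 2 * |k| + c ^ 2 by ring]
    set E := k ^ 2 + ν / 2 * c ^ 2 * |k| + c ^ 2
    field_simp
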